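/- Let b be a prime, m = b², and let s > 1 be a real number. Then Σ_{p prime, p > m} S°(p mod m)·p^{−s} = Σ_χ Ŝ°(χ)·Σ_{p prime, p > m} χ(p)·p^{−s}, where the outer sum on the right runs over all primitive odd Dirichlet characters χ modulo m (all other characters contribute zero). -/

import Mathlib

open Finset
open scoped Classical

namespace Collision

/-- The diagonal set `G = {n < b² : ⌊n/b⌋ = n mod b}`. -/
def diagSet (b : ℕ) : Finset ℕ :=
  (Finset.range (b ^ 2)).filter (fun n => n / b = n % b)

/-- The slice increment `d_n(a) = ⌊(n+1)a/b²⌋ − ⌊na/b²⌋`. -/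
def d (b n a : ℕ) : ℤ :=
  ((((n + 1) * a) / b ^ 2 : ℕ) : ℤ) - (((n * a) / b ^ 2 : ℕ) : ℤ)

/-- The collision invariant `S(a) = −1 − ⌊a/b⌋ + Σ_{n∈G} d_n(a)`. -/
def S (b a : ℕ) : ℤ :=
  -1 - ((a / b : ℕ) : ℤ) + ∑ n ∈ diagSet b, d b n a

/-- The units `a' ∈ {0,…,b²−1}` with `a' ≡ a (mod b)`. -/
def cosetUnits (b a : ℕ) : Finset ℕ :=
  (Finset.range (b ^ 2)).filter (fun a' => Nat.gcd a' (b ^ 2) = 1 ∧ a' % b = a % b)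

/-- The centered collision invariant `S°(a)`. -/
noncomputable def Scirc (b a : ℕ) : ℝ :=
  (S b a : ℝ) - (1 / (b : ℝ)) * ∑ a' ∈ cosetUnits b a, (S b a' : ℝ)

/-- The Fourier coefficient `Ŝ°(χ) = (1/φ(b²))·Σ_a S°(a)·χ̄(a)`. -/
noncomputable def Shat (b : ℕ) (χ : DirichletCharacter ℂ (b ^ 2)) : ℂ :=
  (1 / (Nat.totient (b ^ 2) : ℂ)) *
    ∑ a ∈ Finset.range (b ^ 2), (Scirc b a : ℂ) * starRingEnd ℂ (χ (a : ZMod (b ^ 2)))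

/-- The generalized first Bernoulli number `B_{1,χ̄} = (1/b²)·Σ_a a·χ̄(a)`. -/
noncomputable def B1bar (b : ℕ) (χ : DirichletCharacter ℂ (b ^ 2)) : ℂ :=
  (1 / ((b : ℂ) ^ 2)) *
    ∑ a ∈ Finset.range (b ^ 2), (a : ℂ) * starRingEnd ℂ (χ (a : ZMod (b ^ 2)))

/-- The diagonal character sum `S_G(χ) = Σ_{n∈G} [χ̄(n+1) − χ̄(n)]`. -/
noncomputable def SG (b : ℕ) (χ : DirichletCharacter ℂ (b ^ 2)) : ℂ :=
  ∑ n ∈ diagSet b,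
    (starRingEnd ℂ (χ ((n + 1 : ℕ) : ZMod (b ^ 2))) - starRingEnd ℂ (χ (n : ZMod (b ^ 2))))

end Collision

/-!
For `1 < b`, the reflection `a ↦ b² - a` changes `S` into `-1 - S` on the units modulo `b²`, so `S°`
is odd there and its coefficients at even characters vanish. Centering makes the sum of `S°` over
each class of units modulo `b` vanish, and a character that factors through `b` is constant on such
a class, so its coefficient vanishes too. Fourier inversion on `(ℤ/b²ℤ)ˣ` therefore expands `S°` in
the odd characters that do not factor through `b`, which for `b` prime are the primitive odd ones,
and absolute convergence for `1 < Re s` lets the finite character sum be exchanged with the series.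
-/

namespace Collision

section CharacterCoefficients

variable {n d : ℕ} [NeZero n] {K : Type*} [Field K]

/-- The Fourier coefficient `φ(n)⁻¹ ∑ₓ f(x) χ̄(x)` of a function on `ZMod n` at a Dirichlet
character. The conjugate `χ̄` is written `χ⁻¹`, which makes sense over any field. -/
noncomputable def charCoeff (f : ZMod n → K) (χ : DirichletCharacter K n) : K :=
  1 / (n.totient : K) * ∑ x, f x * χ⁻¹ x

/-- The units of `ZMod n` congruent to `x` modulo the divisor `d` of `n`. -/
noncomputable def unitFiber (hd : d ∣ n) (x : ZMod n) : Finset (ZMod n) :=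
  {y | IsUnit y ∧ ZMod.castHom hd (ZMod d) y = ZMod.castHom hd (ZMod d) x}

lemma mem_unitFiber {hd : d ∣ n} {x y : ZMod n} :
    y ∈ unitFiber hd x ↔
      IsUnit y ∧ ZMod.castHom hd (ZMod d) y = ZMod.castHom hd (ZMod d) x := by
  simp only [unitFiber, mem_filter_univ]

lemma sum_unitFiber_neg {M : Type*} [AddCommMonoid M] (hd : d ∣ n) (g : ZMod n → M)
    (x : ZMod n) : ∑ y ∈ unitFiber hd (-x), g y = ∑ y ∈ unitFiber hd x, g (-y) :=
  sum_equiv (Equiv.neg _)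
    (fun y => by simp only [mem_unitFiber, Equiv.neg_apply, IsUnit.neg_iff, map_neg,
      neg_eq_iff_eq_neg]) fun y _ => by rw [Equiv.neg_apply, neg_neg]

theorem sum_charCoeff_mul [CharZero K] [HasEnoughRootsOfUnity K (Monoid.exponent (ZMod n)ˣ)]
    (f : ZMod n → K) {a : ZMod n} (ha : IsUnit a) :
    ∑ χ : DirichletCharacter K n, charCoeff f χ * χ a = f a := by
  have hφ : (n.totient : K) ≠ 0 :=
    Nat.cast_ne_zero.2 (Nat.totient_pos.2 (Nat.pos_of_neZero n)).ne'
  have inv_apply_unit (χ : DirichletCharacter K n) : χ⁻¹ a = χ a⁻¹ := by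
    rw [MulChar.inv_apply_eq_inv', inv_eq_of_mul_eq_one_left]
    rw [← map_mul, ZMod.inv_mul_of_unit _ ha, map_one]
  calc ∑ χ : DirichletCharacter K n, charCoeff f χ * χ a
      = ∑ χ : DirichletCharacter K n, charCoeff f χ⁻¹ * χ a⁻¹ := by
        rw [← Equiv.sum_comp (Equiv.inv _)]
        simp only [Equiv.inv_apply, inv_apply_unit]
    _ = 1 / (n.totient : K) *
          ∑ x, f x * ∑ χ : DirichletCharacter K n, χ a⁻¹ * χ x := by
        simp only [charCoeff, inv_inv, mul_assoc, ← mul_sum, sum_mul]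
        rw [sum_comm]
        simp only [mul_sum, mul_comm]
    _ = f a := by
        simp only [DirichletCharacter.sum_char_inv_mul_char_eq K ha, mul_ite, mul_zero,
          sum_ite_eq, mem_univ, if_true]
        field_simp

theorem charCoeff_eq_zero_of_not_odd [CharZero K] {f : ZMod n → K}
    (hf : ∀ x, IsUnit x → f (-x) = -f x) {χ : DirichletCharacter K n} (hχ : ¬ χ.Odd) :
    charCoeff f χ = 0 := by
  have hinv : χ⁻¹ (-1) = 1 := by
    rw [MulChar.inv_apply_eq_inv', χ.even_or_odd.resolve_right hχ, inv_one]
  have hterm (x : ZMod n) : f (-x) * χ⁻¹ (-x) = -(f x * χ⁻¹ x) := by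
    by_cases hx : IsUnit x
    · rw [hf x hx, DirichletCharacter.Even.eval_neg _ x hinv, neg_mul]
    · rw [χ⁻¹.map_nonunit hx, χ⁻¹.map_nonunit (mt (IsUnit.neg_iff x).1 hx), mul_zero, mul_zero,
        neg_zero]
  have hsum : ∑ x, f x * χ⁻¹ x = -∑ x, f x * χ⁻¹ x := by
    conv_lhs => rw [← Equiv.sum_comp (Equiv.neg _)]
    simp only [Equiv.neg_apply, hterm, sum_neg_distrib]
  rw [charCoeff, self_eq_neg.1 hsum, mul_zero]

theorem charCoeff_eq_zero_of_factorsThrough {f : ZMod n → K} (hd : d ∣ n)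
    (hf : ∀ x, IsUnit x → ∑ y ∈ unitFiber hd x, f y = 0) {χ : DirichletCharacter K n}
    (hχ : χ.FactorsThrough d) : charCoeff f χ = 0 := by
  have : NeZero d := ⟨ne_zero_of_dvd_ne_zero (NeZero.ne n) hd⟩
  obtain ⟨_, χ₀, rfl⟩ := hχ
  have hconst (x : ZMod n) (hx : IsUnit x) :
      (DirichletCharacter.changeLevel hd χ₀)⁻¹ x = χ₀⁻¹ (ZMod.castHom hd (ZMod d) x) := by
    rw [← map_inv, ← hx.unit_spec, DirichletCharacter.changeLevel_eq_cast_of_dvd,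
      ZMod.castHom_apply]
  rw [charCoeff, ← sum_filter_of_ne (p := IsUnit), ← sum_fiberwise (g := ZMod.castHom hd (ZMod d)),
    sum_eq_zero, mul_zero]
  · intro r _
    rw [filter_filter]
    rcases eq_empty_or_nonempty {x : ZMod n | IsUnit x ∧ ZMod.castHom hd (ZMod d) x = r}
      with hempty | ⟨x, hx⟩
    · rw [hempty, sum_empty]
    obtain ⟨hunit, rfl⟩ := (mem_filter_univ x).1 hx
    calc _ = ∑ y ∈ unitFiber hd x, f y * χ₀⁻¹ (ZMod.castHom hd (ZMod d) x) :=
          sum_congr rfl fun y hy => by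
            obtain ⟨hy, hyx⟩ := mem_unitFiber.1 hy
            rw [hconst y hy, hyx]
      _ = 0 := by rw [← sum_mul, hf x hunit, zero_mul]
  · intro x _ hx
    by_contra hunit
    exact hx (by rw [MulChar.map_nonunit _ hunit, mul_zero])

lemma isPrimitive_prime_pow_succ_iff {R : Type*} [CommMonoidWithZero R] {p k : ℕ}
    (hp : p.Prime) (χ : DirichletCharacter R (p ^ (k + 1))) :
    χ.IsPrimitive ↔ ¬ χ.FactorsThrough (p ^ k) := by
  have : NeZero p := ⟨hp.ne_zero⟩
  have hlt : p ^ k < p ^ (k + 1) := Nat.pow_lt_pow_right hp.one_lt k.lt_succ_self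
  refine ⟨fun hχ h => hlt.not_ge (hχ.symm.trans_le (Nat.sInf_le h)), fun h => ?_⟩
  by_contra hχ
  obtain ⟨i, hi, hcond⟩ := (Nat.dvd_prime_pow hp).1 χ.conductor_dvd_level
  have hik : i ≠ k + 1 := fun hik => hχ (hcond.trans (by rw [hik]))
  have hdvd : χ.conductor ∣ p ^ k := hcond ▸ pow_dvd_pow p (by omega)
  exact h (χ.factorsThrough_conductor.mono _ hdvd (pow_dvd_pow p k.le_succ))

end CharacterCoefficients

section Reflection

lemma natCast_div_add_natCast_div_of_add_eq_mul {m k x y : ℕ} (hm : 0 < m) (h : x + y = m * k) :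
    ((x / m : ℕ) : ℤ) + (y / m : ℕ) = k - 1 + if m ∣ x then 1 else 0 := by
  have hy : (y : ℤ) = -x + m * k := by
    rw [← Nat.cast_mul, ← h, Nat.cast_add, neg_add_cancel_left]
  have hm' : (m : ℤ) ≠ 0 := by exact_mod_cast hm.ne'
  rw [Int.natCast_div, Int.natCast_div, hy, Int.add_mul_ediv_left _ _ hm', Int.neg_ediv,
    Int.sign_natCast_of_ne_zero hm.ne']
  simp only [Int.natCast_dvd_natCast]
  split_ifs <;> ring

variable {b a a' : ℕ}

lemma diagSet_eq_image (b : ℕ) : diagSet b = (range b).image fun k => k + b * k := by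
  ext n
  simp only [diagSet, mem_filter, mem_range, mem_image]
  constructor
  · rintro ⟨hn, hdiag⟩
    refine ⟨n % b, Nat.mod_lt _ (Nat.pos_of_ne_zero (by rintro rfl; simp at hn)), ?_⟩
    conv_rhs => rw [← Nat.mod_add_div n b, hdiag]
  · rintro ⟨k, hk, rfl⟩
    have hb : 0 < b := by omega
    refine ⟨by nlinarith, ?_⟩
    rw [Nat.add_mul_div_left _ _ hb, Nat.div_eq_of_lt hk, Nat.add_mul_mod_self_left,
      Nat.mod_eq_of_lt hk, zero_add]

lemma card_diagSet (b : ℕ) : #(diagSet b) = b := by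
  have hinj : Function.Injective fun k : ℕ => k + b * k := fun k l hkl => by
    simpa [← Nat.succ_mul, ← one_add_mul] using hkl
  rw [diagSet_eq_image, card_image_of_injective _ hinj, card_range]

lemma zero_mem_diagSet (hb : 0 < b) : 0 ∈ diagSet b := by
  simp [diagSet, hb]

lemma sq_sub_one_mem_diagSet (hb : 0 < b) : b ^ 2 - 1 ∈ diagSet b := by
  obtain ⟨c, rfl⟩ := Nat.exists_eq_add_of_lt hb
  rw [diagSet_eq_image, mem_image]
  exact ⟨c, by simp, by rw [eq_tsub_iff_add_eq_of_le (Nat.one_le_pow _ _ hb)]; ring⟩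

lemma d_add_d_of_add_eq_sq (hb : 0 < b) (hab : a.Coprime b) (h : a + a' = b ^ 2) (n : ℕ) :
    d b n a + d b n a' =
      1 + (if b ^ 2 ∣ n + 1 then 1 else 0) - if b ^ 2 ∣ n then 1 else 0 := by
  have hdvd (k : ℕ) : b ^ 2 ∣ k * a ↔ b ^ 2 ∣ k := (hab.pow_right 2).symm.dvd_mul_right
  have hfloor (k : ℕ) : ((k * a / b ^ 2 : ℕ) : ℤ) + (k * a' / b ^ 2 : ℕ) =
      k - 1 + if b ^ 2 ∣ k then 1 else 0 := by
    simp only [← hdvd k]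
    exact natCast_div_add_natCast_div_of_add_eq_mul (by positivity)
      (by rw [← mul_add, h, mul_comm])
  have hn := hfloor n
  have hn' := hfloor (n + 1)
  rw [Nat.cast_succ] at hn'
  simp only [d]
  linarith

lemma sum_diagSet_d_add_sum_diagSet_d (hb : 0 < b) (hab : a.Coprime b) (h : a + a' = b ^ 2) :
    ∑ n ∈ diagSet b, d b n a + ∑ n ∈ diagSet b, d b n a' = b := by
  have hdvd {n : ℕ} (hn : n ∈ diagSet b) :
      (b ^ 2 ∣ n + 1 ↔ n = b ^ 2 - 1) ∧ (b ^ 2 ∣ n ↔ n = 0) := by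
    have hlt : n < b ^ 2 := mem_range.1 (mem_filter.1 hn).1
    exact ⟨⟨fun hn => by have := Nat.le_of_dvd n.succ_pos hn; omega,
      fun hn => by rw [hn, Nat.sub_add_cancel (Nat.one_le_pow _ _ hb)]⟩,
      ⟨fun hn => Nat.eq_zero_of_dvd_of_lt hn hlt, fun hn => hn ▸ dvd_zero _⟩⟩
  calc _ = ∑ n ∈ diagSet b,
        ((1 : ℤ) + (if n = b ^ 2 - 1 then 1 else 0) - if n = 0 then 1 else 0) := by
        rw [← sum_add_distrib]
        exact sum_congr rfl fun n hn => by
          simp only [d_add_d_of_add_eq_sq hb hab h, hdvd hn]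
    -- The corrections at `0` and `b ^ 2 - 1`, the two ends of the diagonal, cancel.
    _ = b := by
        rw [sum_sub_distrib, sum_add_distrib, sum_ite_eq', sum_ite_eq',
          if_pos (zero_mem_diagSet hb), if_pos (sq_sub_one_mem_diagSet hb)]
        simp [card_diagSet]

theorem S_add_S_of_add_eq_sq (hb : 1 < b) (hab : a.Coprime b) (h : a + a' = b ^ 2) :
    S b a + S b a' = -1 := by
  have hdvd : ¬ b ∣ a := fun hba => hb.ne' (Nat.eq_one_of_dvd_coprimes hab hba dvd_rfl)
  have hfloor := natCast_div_add_natCast_div_of_add_eq_mul (by omega) (h.trans (sq b))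
  rw [if_neg hdvd] at hfloor
  have hdiag := sum_diagSet_d_add_sum_diagSet_d (by omega) hab h
  simp only [S]
  linarith

end Reflection

section CenteredInvariant

variable {b : ℕ}

lemma sum_range_eq_sum_zmod_val {M : Type*} [AddCommMonoid M] (n : ℕ) [NeZero n] (g : ℕ → M) :
    ∑ a ∈ range n, g a = ∑ x : ZMod n, g x.val :=
  sum_nbij' (fun a => (a : ZMod n)) ZMod.val (by simp) (by simp [ZMod.val_lt])
    (fun a ha => ZMod.val_cast_of_lt (mem_range.1 ha)) (by simp)
    fun a ha => by rw [ZMod.val_cast_of_lt (mem_range.1 ha)]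

lemma Shat_eq_charCoeff [NeZero b] (χ : DirichletCharacter ℂ (b ^ 2)) :
    Shat b χ = charCoeff (fun x : ZMod (b ^ 2) => (Scirc b x.val : ℂ)) χ := by
  simp only [Shat, charCoeff, sum_range_eq_sum_zmod_val, ZMod.natCast_zmod_val,
    starRingEnd_apply, MulChar.star_apply']

lemma sum_cosetUnits_eq_sum_unitFiber {M : Type*} [AddCommMonoid M] [NeZero b] (g : ℕ → M)
    (x : ZMod (b ^ 2)) :
    ∑ a ∈ cosetUnits b x.val, g a = ∑ y ∈ unitFiber (dvd_pow_self b two_ne_zero) x, g y.val := by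
  have hunit (y : ZMod (b ^ 2)) : y.val.gcd (b ^ 2) = 1 ↔ IsUnit y := by
    rw [← Nat.coprime_iff_gcd_eq_one, ← ZMod.isUnit_iff_coprime, ZMod.natCast_zmod_val]
  have hcast (y : ZMod (b ^ 2)) :
      y.val % b = x.val % b ↔ ZMod.castHom (dvd_pow_self b two_ne_zero) (ZMod b) y =
        ZMod.castHom (dvd_pow_self b two_ne_zero) (ZMod b) x := by
    rw [← ZMod.natCast_eq_natCast_iff', ZMod.castHom_apply, ZMod.castHom_apply, ZMod.natCast_val,
      ZMod.natCast_val]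
  simp only [cosetUnits, unitFiber, sum_filter, sum_range_eq_sum_zmod_val, hunit, hcast]

lemma coprime_val_of_isUnit {x : ZMod (b ^ 2)} (hx : IsUnit x) : x.val.Coprime b :=
  (ZMod.val_coe_unit_coprime hx.unit).of_dvd_right (dvd_pow_self b two_ne_zero)

lemma cosetUnits_congr {a a' : ℕ} (h : a % b = a' % b) : cosetUnits b a = cosetUnits b a' := by
  simp only [cosetUnits, h]

lemma card_cosetUnits (hb : 0 < b) {a : ℕ} (ha : a.Coprime b) : #(cosetUnits b a) = b := by
  have hunit {x : ℕ} (hx : x % b = a % b) : x.gcd (b ^ 2) = 1 :=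
    Nat.Coprime.pow_right 2 (by rwa [Nat.Coprime, Nat.ModEq.gcd_eq hx])
  calc #(cosetUnits b a) = #{x ∈ range (b ^ 2) | x ≡ a [MOD b]} := by
        congr 1
        exact filter_congr fun x _ => ⟨And.right, fun hx => ⟨hunit hx, hx⟩⟩
    _ = b := by
        rw [← Nat.count_eq_card_filter_range, Nat.count_modEq_card _ hb]
        simp [sq, hb]

theorem sum_cosetUnits_Scirc (hb : 0 < b) {a : ℕ} (ha : a.Coprime b) :
    ∑ x ∈ cosetUnits b a, Scirc b x = 0 := by
  have hcoset : ∀ x ∈ cosetUnits b a, Scirc b x =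
      S b x - 1 / (b : ℝ) * ∑ y ∈ cosetUnits b a, (S b y : ℝ) := fun x hx => by
    rw [Scirc, cosetUnits_congr (mem_filter.1 hx).2.2]
  have hb' : (b : ℝ) ≠ 0 := by positivity
  rw [sum_congr rfl hcoset, sum_sub_distrib, sum_const, card_cosetUnits hb ha, nsmul_eq_mul,
    ← mul_assoc, mul_one_div_cancel hb', one_mul, sub_self]

theorem Scirc_val_neg (hb : 1 < b) {x : ZMod (b ^ 2)} (hx : IsUnit x) :
    Scirc b (-x).val = -Scirc b x.val := by
  have : NeZero b := ⟨by omega⟩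
  have : Fact (1 < b ^ 2) := ⟨Nat.one_lt_pow two_ne_zero hb⟩
  have hS (y : ZMod (b ^ 2)) (hy : IsUnit y) : (S b (-y).val : ℝ) = -1 - S b y.val := by
    have hy0 : NeZero y := ⟨hy.ne_zero⟩
    have hval : y.val + (-y).val = b ^ 2 := by
      rw [ZMod.val_neg_of_ne_zero, Nat.add_sub_cancel' y.val_le]
    have := S_add_S_of_add_eq_sq hb (coprime_val_of_isUnit hy) hval
    rw [eq_sub_iff_add_eq']
    exact_mod_cast this
  have hb0 : (b : ℝ) ≠ 0 := NeZero.ne _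
  have hcard : (#(unitFiber (dvd_pow_self b two_ne_zero) x) : ℝ) = b := by
    rw [card_eq_sum_ones, ← sum_cosetUnits_eq_sum_unitFiber (fun _ => 1), ← card_eq_sum_ones,
      card_cosetUnits (by omega) (coprime_val_of_isUnit hx)]
  have hsum : ∑ a ∈ cosetUnits b (-x).val, (S b a : ℝ) =
      -b - ∑ a ∈ cosetUnits b x.val, (S b a : ℝ) := by
    rw [sum_cosetUnits_eq_sum_unitFiber, sum_unitFiber_neg,
      sum_congr rfl fun y hy => hS y (mem_unitFiber.1 hy).1, sum_sub_distrib,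
      sum_const, nsmul_eq_mul, hcard, mul_neg_one, sum_cosetUnits_eq_sum_unitFiber]
  simp only [Scirc, hS x hx, hsum]
  field_simp
  ring

theorem Scirc_val_eq_sum_Shat_mul (hb : 1 < b) {x : ZMod (b ^ 2)} (hx : IsUnit x) :
    (Scirc b x.val : ℂ) =
      ∑ χ : DirichletCharacter ℂ (b ^ 2) with ¬ χ.FactorsThrough b ∧ χ.Odd, Shat b χ * χ x := by
  have : NeZero b := ⟨by omega⟩
  have hodd (y : ZMod (b ^ 2)) (hy : IsUnit y) :
      (Scirc b (-y).val : ℂ) = -(Scirc b y.val : ℂ) := by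
    rw [Scirc_val_neg hb hy, Complex.ofReal_neg]
  have hmean (y : ZMod (b ^ 2)) (hy : IsUnit y) :
      ∑ z ∈ unitFiber (dvd_pow_self b two_ne_zero) y, (Scirc b z.val : ℂ) = 0 := by
    rw [← Complex.ofReal_sum, ← sum_cosetUnits_eq_sum_unitFiber,
      sum_cosetUnits_Scirc (by omega) (coprime_val_of_isUnit hy), Complex.ofReal_zero]
  have hShat (χ : DirichletCharacter ℂ (b ^ 2)) (hχ : Shat b χ * χ x ≠ 0) :
      ¬ χ.FactorsThrough b ∧ χ.Odd := by
    have hne := left_ne_zero_of_mul hχ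
    rw [Shat_eq_charCoeff] at hne
    exact ⟨mt (charCoeff_eq_zero_of_factorsThrough _ hmean) hne,
      not_imp_comm.1 (charCoeff_eq_zero_of_not_odd hodd) hne⟩
  rw [sum_filter_of_ne fun χ _ => hShat χ]
  simp only [Shat_eq_charCoeff]
  exact (sum_charCoeff_mul (fun y : ZMod (b ^ 2) => (Scirc b y.val : ℂ)) hx).symm

end CenteredInvariant

lemma summable_mul_cpow_neg {n : ℕ} [NeZero n] (f : ZMod n → ℂ) {s : ℂ} (hs : 1 < s.re) :
    Summable fun k : ℕ => f k * (k : ℂ) ^ (-s) := by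
  have hs0 : -s ≠ 0 := neg_ne_zero.2 (Complex.ne_zero_of_one_lt_re hs)
  refine (ZMod.LSeriesSummable_of_one_lt_re f hs).congr fun k => ?_
  rcases eq_or_ne k 0 with rfl | hk
  · rw [LSeries.term_zero, Nat.cast_zero (R := ℂ), Complex.zero_cpow hs0, mul_zero]
  · rw [LSeries.term_of_ne_zero hk, Complex.cpow_neg, div_eq_mul_inv]

end Collision

open Collision in
theorem stmt14_general {b : ℕ} (hb : 1 < b) {P : ℕ → Prop} (hP : ∀ k, P k → k.Coprime b)
    {s : ℂ} (hs : 1 < s.re) :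
    ∑' k : {k : ℕ // P k}, (Scirc b ((k : ℕ) % b ^ 2) : ℂ) * ((k : ℕ) : ℂ) ^ (-s) =
      ∑ χ : DirichletCharacter ℂ (b ^ 2) with ¬ χ.FactorsThrough b ∧ χ.Odd,
        Shat b χ * ∑' k : {k : ℕ // P k},
          χ ((k : ℕ) : ZMod (b ^ 2)) * ((k : ℕ) : ℂ) ^ (-s) := by
  have : NeZero b := ⟨by omega⟩
  have hsummable (χ : DirichletCharacter ℂ (b ^ 2)) : Summable fun k : {k : ℕ // P k} =>
      χ ((k : ℕ) : ZMod (b ^ 2)) * ((k : ℕ) : ℂ) ^ (-s) :=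
    (summable_mul_cpow_neg χ hs).subtype {k | P k}
  simp only [← tsum_mul_left]
  rw [← Summable.tsum_finsetSum fun χ _ => (hsummable χ).mul_left _]
  refine tsum_congr fun ⟨k, hk⟩ => ?_
  have hunit : IsUnit (k : ZMod (b ^ 2)) :=
    (ZMod.isUnit_iff_coprime _ _).2 ((hP k hk).pow_right 2)
  rw [← ZMod.val_natCast, Scirc_val_eq_sum_Shat_mul hb hunit, sum_mul]
  simp only [mul_assoc]

open Collision in
theorem stmt14 (b : ℕ) (hb : b.Prime) (s : ℝ) (hs : 1 < s) :
    ∑' p : {p : ℕ // p.Prime ∧ b ^ 2 < p},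
        ((Scirc b ((p : ℕ) % b ^ 2) : ℝ) : ℂ) * ((p : ℕ) : ℂ) ^ (-(s : ℂ))
      = ∑ χ ∈ Finset.univ.filter
          (fun χ : DirichletCharacter ℂ (b ^ 2) => χ.IsPrimitive ∧ χ.Odd),
          Shat b χ * ∑' p : {p : ℕ // p.Prime ∧ b ^ 2 < p},
            χ ((p : ℕ) : ZMod (b ^ 2)) * ((p : ℕ) : ℂ) ^ (-(s : ℂ)) := by
  have hcoprime (p : ℕ) (hp : p.Prime ∧ b ^ 2 < p) : p.Coprime b :=
    (Nat.coprime_primes hp.1 hb).2 (by nlinarith [hb.pos])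
  simpa only [isPrimitive_prime_pow_succ_iff (k := 1) hb, pow_one] using
    stmt14_general hb.one_lt hcoprime (s := s) (by simpa only [Complex.ofReal_re] using hs)
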